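/- Let G=(V,E) be a finite simple graph and let b ∈ ℕ. If G has a path covering family 𝒫 with K_𝒫(e) ≤ b for every edge e, then G is algebraic total weight (1, b+1)-choosable; in particular there exists K' : E → ℕ with K'(e) ≤ b for all e such that the coefficient of x^{K'} in P_G is nonzero. -/

import Mathlib

open scoped BigOperators

/-- The polynomial `P_G = ∏_{{i,j} ∈ E, i<j} (Σ_{e ∈ E(i)} x_e − Σ_{e ∈ E(j)} x_e)` in the
variables `{x_e : e ∈ E}`, where `E(v)` is the set of edges incident to `v`.  The endpoints
of an edge `e = {i,j}` with `i < j` are `Sym2.inf e = i` and `Sym2.sup e = j`. -/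
noncomputable def PG {n : ℕ} (G : SimpleGraph (Fin n)) [DecidableRel G.Adj] :
    MvPolynomial (↥G.edgeFinset) ℂ :=
  ∏ e : ↥G.edgeFinset,
    ((∑ e' : ↥G.edgeFinset, if Sym2.inf e.val ∈ e'.val then MvPolynomial.X e' else 0)
      - (∑ e' : ↥G.edgeFinset, if Sym2.sup e.val ∈ e'.val then MvPolynomial.X e' else 0))

/-!
On polynomials, the apolar form `⟨p, q⟩ = Σ_K K! p_K q_K` is positive definite over an ordered ring,
and multiplication by `x_i` is adjoint to `∂_i`. By the chain rule, substituting linear forms with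
coefficient matrix `B` is therefore adjoint to substituting linear forms with matrix `Bᵀ`.

Apply this to the incidence matrix `B` of `G`: let `φ` send a vertex variable `y_v` to
`Σ_{e ∈ E(v)} x_e` and `ψ` send an edge variable `x_e`, `e = {u, v}`, to `y_u + y_v`.
If `P_e` is an even walk from `i` to `j`, then `ψ` sends the alternating sum `q_e` of the
edge variables along `P_e` to the telescoping sum `y_i - y_j`. Put `q = ∏_e q_e` and
`D = ∏_{i < j} (y_i - y_j)`, the product being over edges `{i, j}`. Then `ψ q = D` and `φ D = P_G`,
so `⟨P_G, q⟩ = ⟨φ D, q⟩ = ⟨D, ψ q⟩ = ⟨D, D⟩ > 0`. Hence some monomial occurs in both `P_G` and `q`,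
and in a monomial of `q` the exponent of `x_e` is at most the number of walks through `e`.
-/

open MvPolynomial Matrix
open scoped Nat

section ApolarForm

variable {σ τ R : Type*}

section CommSemiring

variable [CommSemiring R]

/-- The apolar (Fischer, Bombieri) form `⟨p, q⟩ = Σ_K K! p_K q_K` on polynomials, where
`K! = ∏ i, (K i)!`. It is defined by its values `⟨x^K, q⟩ = K! q_K` on the monomial basis. -/
noncomputable def apolarForm : MvPolynomial σ R →ₗ[R] MvPolynomial σ R →ₗ[R] R :=
  (basisMonomials σ R).constr R fun K => (K.prod fun _ k => (k ! : R)) • lcoeff R K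

lemma apolarForm_monomial_left (K : σ →₀ ℕ) (a : R) (q : MvPolynomial σ R) :
    apolarForm (monomial K a) q = a * ((K.prod fun _ k => (k ! : R)) * coeff K q) := by
  have hK : monomial K a = a • basisMonomials σ R K := by
    rw [coe_basisMonomials, smul_monomial, smul_eq_mul, mul_one]
  rw [hK, map_smul, apolarForm, Module.Basis.constr_basis]
  rfl

lemma apolarForm_apply (p q : MvPolynomial σ R) :
    apolarForm p q =
      ∑ K ∈ p.support, coeff K p * ((K.prod fun _ k => (k ! : R)) * coeff K q) := by
  conv_lhs => rw [p.as_sum]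
  simp only [map_sum, LinearMap.sum_apply, apolarForm_monomial_left]

lemma exists_coeff_ne_zero_of_apolarForm_ne_zero {p q : MvPolynomial σ R}
    (h : apolarForm p q ≠ 0) : ∃ K, coeff K p ≠ 0 ∧ coeff K q ≠ 0 := by
  rw [apolarForm_apply] at h
  obtain ⟨K, hKp, hK⟩ := Finset.exists_ne_zero_of_sum_ne_zero h
  exact ⟨K, mem_support_iff.mp hKp, right_ne_zero_of_mul (right_ne_zero_of_mul hK)⟩

lemma prod_factorial_add_single (K : σ →₀ ℕ) (i : σ) :
    ((K + Finsupp.single i 1).prod fun _ k => (k ! : R)) =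
      (K i + 1) * K.prod fun _ k => (k ! : R) := by
  have hzero : ∀ _ : σ, ((0 ! : ℕ) : R) = 1 := fun _ => by rw [Nat.factorial_zero, Nat.cast_one]
  rw [← Finsupp.mul_prod_erase' _ i _ hzero, ← Finsupp.mul_prod_erase' K i _ hzero,
    Finsupp.erase_add, Finsupp.erase_single, add_zero, Finsupp.add_apply, Finsupp.single_eq_same,
    Nat.factorial_succ]
  push_cast
  ring

lemma apolarForm_X_mul_left (i : σ) (p q : MvPolynomial σ R) :
    apolarForm (X i * p) q = apolarForm p (pderiv i q) := by
  induction p using MvPolynomial.induction_on' with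
  | monomial K a =>
    rw [X, monomial_mul, one_mul, add_comm, apolarForm_monomial_left, apolarForm_monomial_left,
      prod_factorial_add_single, coeff_pderiv]
    ring
  | add p₁ p₂ h₁ h₂ => simp only [mul_add, map_add, LinearMap.add_apply, h₁, h₂]

lemma apolarForm_C_left (a : R) (q : MvPolynomial σ R) :
    apolarForm (C a) q = a * constantCoeff q := by
  rw [C_apply, apolarForm_monomial_left, Finsupp.prod_zero_index, one_mul, constantCoeff_eq]

lemma apolarForm_toMvPolynomial_mul_left [Fintype σ] (B : Matrix τ σ R) (v : τ)
    (p q : MvPolynomial σ R) :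
    apolarForm (B.toMvPolynomial v * p) q = apolarForm p (∑ e, B v e • pderiv e q) := by
  have hB : B.toMvPolynomial v * p = ∑ e, B v e • (X e * p) := by
    simp only [toMvPolynomial, Finset.sum_mul, ← C_mul_X_eq_monomial, smul_eq_C_mul, mul_assoc]
  simp only [hB, map_sum, map_smul, LinearMap.sum_apply, LinearMap.smul_apply,
    apolarForm_X_mul_left]

lemma constantCoeff_bind₁ {f : σ → MvPolynomial τ R} (hf : ∀ e, constantCoeff (f e) = 0)
    (q : MvPolynomial σ R) : constantCoeff (bind₁ f q) = constantCoeff q := by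
  induction q using MvPolynomial.induction_on with
  | C a => simp
  | add q₁ q₂ h₁ h₂ => simp [h₁, h₂]
  | mul_X q e _ => simp [hf]

lemma pderiv_bind₁ [Fintype σ] (f : σ → MvPolynomial τ R) (v : τ) (q : MvPolynomial σ R) :
    pderiv v (bind₁ f q) = ∑ e, bind₁ f (pderiv e q) * pderiv v (f e) := by
  classical
  induction q using MvPolynomial.induction_on with
  | C a => simp
  | add q₁ q₂ h₁ h₂ => simp [h₁, h₂, add_mul, Finset.sum_add_distrib]
  | mul_X q i h =>
    simp [h, Derivation.leibniz, add_mul, Finset.sum_add_distrib, Finset.mul_sum, mul_assoc,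
      Pi.single_apply, apply_ite (bind₁ f)]

/-- Here `g` stands in for `Bᵀ.toMvPolynomial`, which is defined only for finite `τ`. -/
theorem apolarForm_bind₁_toMvPolynomial [Fintype σ] {B : Matrix τ σ R}
    {g : σ → MvPolynomial τ R} (hg₀ : ∀ e, constantCoeff (g e) = 0)
    (hg : ∀ v e, pderiv v (g e) = C (B v e)) (p : MvPolynomial τ R) (q : MvPolynomial σ R) :
    apolarForm (bind₁ B.toMvPolynomial p) q = apolarForm p (bind₁ g q) := by
  induction p using MvPolynomial.induction_on generalizing q with
  | C a => rw [bind₁_C_right, apolarForm_C_left, apolarForm_C_left, constantCoeff_bind₁ hg₀]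
  | add p₁ p₂ h₁ h₂ => simp only [map_add, LinearMap.add_apply, h₁, h₂]
  | mul_X p v h =>
    have hderiv : pderiv v (bind₁ g q) = bind₁ g (∑ e, B v e • pderiv e q) := by
      simp only [pderiv_bind₁, hg, map_sum, smul_eq_C_mul, map_mul, bind₁_C_right, mul_comm]
    rw [mul_comm p, map_mul, bind₁_X_right, apolarForm_toMvPolynomial_mul_left, h,
      apolarForm_X_mul_left, hderiv]

end CommSemiring

variable [CommRing R] [LinearOrder R] [IsStrictOrderedRing R]

lemma apolarForm_self_pos {p : MvPolynomial σ R} (hp : p ≠ 0) : 0 < apolarForm p p := by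
  rw [apolarForm_apply]
  refine Finset.sum_pos (fun K hK => ?_) (support_nonempty.mpr hp)
  have hfact : (0 : R) < K.prod fun _ k => (k ! : R) :=
    Finset.prod_pos fun i _ => Nat.cast_pos.mpr (K i).factorial_pos
  rw [mul_left_comm]
  exact mul_pos hfact (mul_self_pos.mpr (mem_support_iff.mp hK))

theorem exists_coeff_bind₁_toMvPolynomial_ne_zero [Fintype σ] {B : Matrix τ σ R}
    {g : σ → MvPolynomial τ R} (hg₀ : ∀ e, constantCoeff (g e) = 0)
    (hg : ∀ v e, pderiv v (g e) = C (B v e)) {q : MvPolynomial σ R} (hq : bind₁ g q ≠ 0) :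
    ∃ K, coeff K (bind₁ B.toMvPolynomial (bind₁ g q)) ≠ 0 ∧ coeff K q ≠ 0 := by
  apply exists_coeff_ne_zero_of_apolarForm_ne_zero
  rw [apolarForm_bind₁_toMvPolynomial hg₀ hg]
  exact (apolarForm_self_pos hq).ne'

end ApolarForm

section Incidence

variable {V : Type*} [DecidableEq V] (G : SimpleGraph V) [Fintype G.edgeSet] (R : Type*)

/-- The vertex-edge incidence matrix of `G`. Its columns are the edges of `G`, whereas those of
`SimpleGraph.incMatrix` are all unordered pairs of vertices. -/
def edgeIncMatrix [Zero R] [One R] : Matrix V G.edgeFinset R :=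
  .of fun v e => if v ∈ e.val then 1 else 0

/-- The linear form `Σ_{e ∈ E(v)} x_e`, whose value is the total weight at the vertex `v` of an
edge weighting `x`. -/
noncomputable def incidentEdgeSum [CommSemiring R] (v : V) : MvPolynomial G.edgeFinset R :=
  ∑ e : G.edgeFinset, if v ∈ e.val then X e else 0

lemma toMvPolynomial_edgeIncMatrix [CommSemiring R] (v : V) :
    (edgeIncMatrix G R).toMvPolynomial v = incidentEdgeSum G R v := by
  refine Finset.sum_congr rfl fun e _ => ?_
  rw [edgeIncMatrix, of_apply, apply_ite (monomial _), map_zero, X]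

lemma isHomogeneous_incidentEdgeSum [CommSemiring R] (v : V) :
    (incidentEdgeSum G R v).IsHomogeneous 1 :=
  toMvPolynomial_edgeIncMatrix G R v ▸ toMvPolynomial_isHomogeneous _ v

lemma isHomogeneous_prod_incidentEdgeSum_sub {ι : Type*} [Fintype ι] [CommRing R] (s t : ι → V) :
    (∏ i, (incidentEdgeSum G R (s i) - incidentEdgeSum G R (t i))).IsHomogeneous
      (Fintype.card ι) := by
  simpa using IsHomogeneous.prod Finset.univ
    (fun i => incidentEdgeSum G R (s i) - incidentEdgeSum G R (t i)) 1 fun i _ =>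
    (isHomogeneous_incidentEdgeSum G R (s i)).sub (isHomogeneous_incidentEdgeSum G R (t i))

lemma map_incidentEdgeSum {S : Type*} [CommSemiring R] [CommSemiring S] (f : R →+* S) (v : V) :
    map f (incidentEdgeSum G R v) = incidentEdgeSum G S v := by
  simp only [incidentEdgeSum, map_sum, apply_ite (map f), map_X, map_zero]

end Incidence

section EndpointSum

variable {V R : Type*} [CommSemiring R]

/-- The linear form `y_u + y_v` of an unordered pair `e = {u, v}`. On the edges of a graph, these
are the linear forms whose coefficients are the columns of `edgeIncMatrix`. -/
noncomputable def endpointSum (e : Sym2 V) : MvPolynomial V R :=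
  Sym2.lift ⟨fun u v => X u + X v, fun u v => add_comm (X u) (X v)⟩ e

lemma endpointSum_mk (u v : V) : (endpointSum s(u, v) : MvPolynomial V R) = X u + X v :=
  rfl

lemma constantCoeff_endpointSum (e : Sym2 V) :
    constantCoeff (endpointSum e : MvPolynomial V R) = 0 := by
  induction e with
  | _ u v => rw [endpointSum_mk, map_add, constantCoeff_X, constantCoeff_X, add_zero]

lemma pderiv_endpointSum [DecidableEq V] {G : SimpleGraph V} [Fintype G.edgeSet] (w : V)
    (e : G.edgeFinset) : pderiv w (endpointSum e.val) = C (edgeIncMatrix G R w e) := by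
  obtain ⟨e, he⟩ := e
  induction e with
  | _ u v =>
    have huv : u ≠ v := (SimpleGraph.mem_edgeFinset.mp he).ne
    by_cases hu : w = u
    · simp [endpointSum_mk, edgeIncMatrix, hu, huv]
    · by_cases hv : w = v <;> simp [endpointSum_mk, edgeIncMatrix, pderiv_X, hu, hv, huv, huv.symm]

end EndpointSum

section AlternatingEdgeSum

variable {V : Type*} {G : SimpleGraph V} [Fintype G.edgeSet]
variable (R : Type*) [CommRing R]

/-- The alternating sum `x_{e₁} - x_{e₂} + x_{e₃} - ⋯` of the edge variables along a walk. -/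
noncomputable def alternatingEdgeSum {u v : V} : G.Walk u v → MvPolynomial G.edgeFinset R
  | .nil => 0
  | .cons h p => X ⟨s(_, _), SimpleGraph.mem_edgeFinset.mpr h⟩ - alternatingEdgeSum p

lemma degreeOf_alternatingEdgeSum_le [DecidableEq V] {u v : V} (p : G.Walk u v)
    (e : G.edgeFinset) :
    degreeOf e (alternatingEdgeSum R p) ≤ if e.val ∈ p.edges then 1 else 0 := by
  cases subsingleton_or_nontrivial R
  · simp [Subsingleton.elim (alternatingEdgeSum R p) 0]
  induction p with
  | nil => simp [alternatingEdgeSum]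
  | @cons u w v h p ih =>
    refine (degreeOf_sub_le _ _ _).trans (max_le ?_ (ih.trans ?_))
    · rw [degreeOf_X]
      split_ifs <;> simp_all
    · split_ifs <;> simp_all

lemma bind₁_endpointSum_alternatingEdgeSum {u v : V} (p : G.Walk u v) :
    bind₁ (fun e : G.edgeFinset => endpointSum e.val) (alternatingEdgeSum R p) =
      X u - (-1) ^ p.length * X v := by
  induction p with
  | nil => simp [alternatingEdgeSum]
  | cons h p ih =>
    rw [alternatingEdgeSum, map_sub, ih, bind₁_X_right, endpointSum_mk,
      SimpleGraph.Walk.length_cons, pow_succ]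
    ring

lemma le_card_of_coeff_prod_alternatingEdgeSum_ne_zero {ι : Type*} [Fintype ι]
    [DecidableEq V] {s t : ι → V} (P : ∀ i, G.Walk (s i) (t i)) {K : G.edgeFinset →₀ ℕ}
    (hK : coeff K (∏ i, alternatingEdgeSum R (P i)) ≠ 0) (e : G.edgeFinset) :
    K e ≤ Finset.card {i | e.val ∈ (P i).edges} :=
  calc K e ≤ degreeOf e (∏ i, alternatingEdgeSum R (P i)) :=
        monomial_le_degreeOf e (mem_support_iff.mpr hK)
    _ ≤ ∑ i, degreeOf e (alternatingEdgeSum R (P i)) := degreeOf_prod_le e _ _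
    _ ≤ ∑ i, if e.val ∈ (P i).edges then 1 else 0 :=
        Finset.sum_le_sum fun i _ => degreeOf_alternatingEdgeSum_le R (P i) e
    _ = Finset.card {i | e.val ∈ (P i).edges} := (Finset.card_filter _ _).symm

end AlternatingEdgeSum

section Walks

variable {V ι : Type*} [DecidableEq V] [Fintype ι]

lemma exists_coeff_prod_incidentEdgeSum_sub_ne_zero {R : Type*} [CommRing R] [LinearOrder R]
    [IsStrictOrderedRing R] (G : SimpleGraph V) [Fintype G.edgeSet] {s t : ι → V}
    (hst : ∀ i, s i ≠ t i) (P : ∀ i, G.Walk (s i) (t i)) (hP : ∀ i, Even (P i).length) :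
    ∃ K, coeff K (∏ i, (incidentEdgeSum G R (s i) - incidentEdgeSum G R (t i))) ≠ 0 ∧
      coeff K (∏ i, alternatingEdgeSum R (P i)) ≠ 0 := by
  have htelescope : bind₁ (fun e : G.edgeFinset => endpointSum e.val)
      (∏ i, alternatingEdgeSum R (P i)) = ∏ i, (X (s i) - X (t i)) := by
    simp only [map_prod, bind₁_endpointSum_alternatingEdgeSum, (hP _).neg_one_pow, one_mul]
  have hprod : ∏ i, (X (s i) - X (t i) : MvPolynomial V R) ≠ 0 :=
    Finset.prod_ne_zero_iff.mpr fun i _ => sub_ne_zero.mpr (X_injective.ne (hst i))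
  obtain ⟨K, hK, hKP⟩ := exists_coeff_bind₁_toMvPolynomial_ne_zero (B := edgeIncMatrix G R)
    (fun e => constantCoeff_endpointSum e.val) pderiv_endpointSum (htelescope ▸ hprod)
  refine ⟨K, ?_, hKP⟩
  simpa only [htelescope, map_prod, map_sub, bind₁_X_right, toMvPolynomial_edgeIncMatrix] using hK

theorem algebraic_choosable_of_pathCoveringFamily_general {R : Type*} [CommRing R] [CharZero R]
    (G : SimpleGraph V) [Fintype G.edgeSet] {s t : ι → V} (hst : ∀ i, s i ≠ t i)
    (P : ∀ i, G.Walk (s i) (t i)) (hP : ∀ i, Even (P i).length) :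
    ∃ K : G.edgeFinset →₀ ℕ, K.degree = Fintype.card ι ∧
      (∀ e, K e ≤ Finset.card {i | e.val ∈ (P i).edges}) ∧
      coeff K (∏ i, (incidentEdgeSum G R (s i) - incidentEdgeSum G R (t i))) ≠ 0 := by
  -- The apolar form is definite only over an ordered ring, so the monomial is found over `ℤ`.
  obtain ⟨K, hK, hKP⟩ := exists_coeff_prod_incidentEdgeSum_sub_ne_zero (R := ℤ) G hst P hP
  refine ⟨K, ?_, le_card_of_coeff_prod_alternatingEdgeSum_ne_zero ℤ P hKP, ?_⟩
  · by_contra hdegree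
    exact hK ((isHomogeneous_prod_incidentEdgeSum_sub G ℤ s t).coeff_eq_zero hdegree)
  · have hmap : map (Int.castRingHom R)
        (∏ i, (incidentEdgeSum G ℤ (s i) - incidentEdgeSum G ℤ (t i))) =
        ∏ i, (incidentEdgeSum G R (s i) - incidentEdgeSum G R (t i)) := by
      simp only [map_prod, map_sub, map_incidentEdgeSum]
    rw [← hmap, coeff_map]
    exact Int.cast_ne_zero.mpr hK

end Walks

lemma inf_ne_sup_of_not_isDiag {α : Type*} [Lattice α] {e : Sym2 α} (he : ¬e.IsDiag) :
    e.inf ≠ e.sup := by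
  induction e with
  | _ a b => simpa using he

/-- If `G` has a path covering family `𝒫` — a family assigning to each edge `e = {i,j}`
an even-length path `𝒫 e` joining `i` and `j` — such that every edge of `G` lies on at
most `b` of the paths (counted with multiplicity), then `G` is algebraic total weight
`(1, b+1)`-choosable: there is `K' : E → ℕ` with `Σ_e K' e = |E|`, `K' e ≤ b` for all `e`,
and the coefficient of `x^{K'}` in `P_G` nonzero. -/
theorem algebraic_choosable_of_pathCoveringFamily {n b : ℕ} (G : SimpleGraph (Fin n))
    [DecidableRel G.Adj]
    (P : (e : ↥G.edgeFinset) → G.Walk (Sym2.inf e.val) (Sym2.sup e.val))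
    (hpath : ∀ e, (P e).IsPath ∧ Even (P e).length)
    (hb : ∀ e' : ↥G.edgeFinset,
      (∑ e : ↥G.edgeFinset, if e'.val ∈ (P e).edges then 1 else 0) ≤ b) :
    ∃ K' : ↥G.edgeFinset → ℕ, (∑ e, K' e) = G.edgeFinset.card ∧ (∀ e, K' e ≤ b) ∧
      MvPolynomial.coeff (Finsupp.equivFunOnFinite.symm K') (PG G) ≠ 0 := by
  obtain ⟨K, hdegree, hle, hK⟩ := algebraic_choosable_of_pathCoveringFamily_general (R := ℂ) G
    (fun e => inf_ne_sup_of_not_isDiag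
      (G.not_isDiag_of_mem_edgeSet (SimpleGraph.mem_edgeFinset.mp e.property)))
    P fun e => (hpath e).2
  refine ⟨K, ?_, fun e => (hle e).trans ?_, ?_⟩
  · rwa [Finsupp.degree_eq_sum, Fintype.card_coe] at hdegree
  · rw [Finset.card_filter]
    exact hb e
  · rwa [Finsupp.equivFunOnFinite_symm_coe]
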